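/- arXiv:2405.04330 — 2 statements merged into one kernel-verified Lean document; each statement's English description precedes it below -/
import Mathlib

section
/- Let A ∈ ℝ^{m×n} be partitioned in blocks A = [[A11, A12],[A21, A22]] with A11 ∈ ℝ^{k×k} invertible (any row/column permutations are absorbed into the partition), and let A_k = [[A11, A12],[A21, A21·A11⁻¹·A12]] be the rank-k approximant of the partial LU factorization, so that A − A_k = [[0,0],[0,S(A11)]] with Schur complement S(A11) = A22 − A21·A11⁻¹·A12. If A11 is a local maximum volume k×k submatrix of A, then for every 1 ≤ j ≤ min(m,n) − k: σ_{k+j}(A) ≤ σ_j(A − A_k) ≤ (1 + 5k√(mn))·σ_{k+j}(A). -/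
open Matrix

/-- The spectral norm (`‖·‖₂`, largest singular value) of a real matrix. -/
noncomputable def specNorm {m n : Type*} [Fintype m] [Fintype n] [DecidableEq n]
    (A : Matrix m n ℝ) : ℝ :=
  ‖LinearMap.toContinuousLinearMap (Matrix.toEuclideanLin A)‖

/-- `sval A j` is the `j`-th largest singular value of `A` (1-indexed), characterized as the
distance, in the spectral norm, from `A` to the set of matrices of rank `< j`. -/
noncomputable def sval {m n : Type*} [Fintype m] [Fintype n] [DecidableEq n]
    (A : Matrix m n ℝ) (j : ℕ) : ℝ :=
  sInf {x : ℝ | ∃ B : Matrix m n ℝ, B.rank < j ∧ x = specNorm (A - B)}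

/-- The volume of a matrix: the product of its singular values. -/
noncomputable def vol {m n : Type*} [Fintype m] [Fintype n] [DecidableEq n]
    (A : Matrix m n ℝ) : ℝ :=
  ∏ j ∈ Finset.Icc 1 (min (Fintype.card m) (Fintype.card n)), sval A j

/-- `DiffOne b r` : `r` is an injective selection of indices whose image (index set)
differs from the index set selected by `b` in at most one element. -/
def DiffOne {ι α : Type*} [Fintype ι] [DecidableEq α] (b r : ι → α) : Prop :=
  Function.Injective r ∧ (Finset.univ.image r \ Finset.univ.image b).card ≤ 1


section Aux

variable {m n : Type*} [Fintype m] [Fintype n] [DecidableEq n]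

lemma specNorm_nonneg (A : Matrix m n ℝ) : 0 ≤ specNorm A := norm_nonneg _

lemma le_specNorm (A : Matrix m n ℝ) (x : EuclideanSpace ℝ n) :
    ‖Matrix.toEuclideanLin A x‖ ≤ specNorm A * ‖x‖ :=
  (LinearMap.toContinuousLinearMap (Matrix.toEuclideanLin A)).le_opNorm x

lemma specNorm_le (A : Matrix m n ℝ) {C : ℝ} (hC : 0 ≤ C)
    (h : ∀ x : EuclideanSpace ℝ n, ‖Matrix.toEuclideanLin A x‖ ≤ C * ‖x‖) : specNorm A ≤ C :=
  ContinuousLinearMap.opNorm_le_bound _ hC h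

lemma sval_le (A B : Matrix m n ℝ) {j : ℕ} (h : B.rank < j) : sval A j ≤ specNorm (A - B) :=
  csInf_le ⟨0, by rintro x ⟨B, _, rfl⟩; exact specNorm_nonneg _⟩ ⟨B, h, rfl⟩

lemma le_sval (A : Matrix m n ℝ) {j : ℕ} (hj : 1 ≤ j) {c : ℝ}
    (h : ∀ B : Matrix m n ℝ, B.rank < j → c ≤ specNorm (A - B)) : c ≤ sval A j := by
  refine le_csInf ⟨_, 0, ?_, rfl⟩ ?_
  · rw [Matrix.rank_zero]; omega
  · rintro x ⟨B, hB, rfl⟩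
    exact h B hB

lemma sval_nonneg (A : Matrix m n ℝ) (j : ℕ) : 0 ≤ sval A j :=
  Real.sInf_nonneg (by rintro x ⟨B, _, rfl⟩; exact specNorm_nonneg _)

lemma exists_ker {V : Type*} [AddCommGroup V] [Module ℝ V] [FiniteDimensional ℝ V]
    (B : Matrix m n ℝ) (G : V →ₗ[ℝ] (n → ℝ)) (h : B.rank < Module.finrank ℝ V) :
    ∃ v : V, v ≠ 0 ∧ B *ᵥ (G v) = 0 := by
  have h1 := LinearMap.ker_ne_bot_of_finrank_lt (f := (B.mulVecLin.rangeRestrict).comp G) h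
  obtain ⟨v, hv, hv0⟩ := (Submodule.ne_bot_iff _).1 h1
  refine ⟨v, hv0, ?_⟩
  have := congrArg Subtype.val (LinearMap.mem_ker.1 hv)
  simpa using this

/-- SVD data -/
lemma exists_svd (A : Matrix m n ℝ) :
    ∃ (b : OrthonormalBasis (Fin (Fintype.card n)) ℝ (EuclideanSpace ℝ n)),
      ∀ x, ‖Matrix.toEuclideanLin A x‖ ^ 2 =
        ∑ i, (Matrix.toEuclideanLin A).singularValues i.1 ^ 2 * (b.repr x i) ^ 2 := by
  set T := Matrix.toEuclideanLin A
  have hn : Module.finrank ℝ (EuclideanSpace ℝ n) = Fintype.card n := finrank_euclideanSpace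
  have hs := T.isSymmetric_adjoint_comp_self
  refine ⟨hs.eigenvectorBasis hn, fun x => ?_⟩
  rw [← real_inner_self_eq_norm_sq, ← LinearMap.adjoint_inner_right,
    ← (hs.eigenvectorBasis hn).repr.inner_map_map, PiLp.inner_apply]
  refine Finset.sum_congr rfl fun i _ => ?_
  have := hs.eigenvectorBasis_apply_self_apply hn x i
  simp only [LinearMap.comp_apply] at this
  rw [this, T.sq_singularValues_fin hn]
  simp
  ring

/-- first `j` right singular vectors -/
noncomputable def colsMat (b : OrthonormalBasis (Fin (Fintype.card n)) ℝ (EuclideanSpace ℝ n)) (j : ℕ)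
    (hj : j ≤ Fintype.card n) : Matrix n (Fin j) ℝ := Matrix.of fun a i => b (Fin.castLE hj i) a

lemma repr_cols (b : OrthonormalBasis (Fin (Fintype.card n)) ℝ (EuclideanSpace ℝ n)) (j : ℕ)
    (hj : j ≤ Fintype.card n) (y : Fin j → ℝ) (i : Fin (Fintype.card n)) :
    b.repr (WithLp.toLp 2 (colsMat b j hj *ᵥ y)) i = if h : i.1 < j then y ⟨i, h⟩ else 0 := by
  have : WithLp.toLp 2 (colsMat b j hj *ᵥ y) = ∑ l, y l • b (Fin.castLE hj l) := by
    ext a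
    simp [colsMat, Matrix.mulVec, dotProduct, mul_comm]
  rw [this]
  simp only [map_sum, map_smul, b.repr_self, WithLp.ofLp_sum, WithLp.ofLp_smul, Finset.sum_apply,
    Pi.smul_apply, PiLp.single_apply, smul_eq_mul, mul_ite, mul_one, mul_zero]
  split_ifs with h
  · rw [Finset.sum_eq_single ⟨i, h⟩]
    · simp
    · intro l _ hl
      rw [if_neg]
      rintro rfl
      exact hl rfl
    · simp
  · refine Finset.sum_eq_zero fun l _ => ?_
    rw [if_neg]
    rintro rfl
    exact h l.2

lemma cols_transpose (b : OrthonormalBasis (Fin (Fintype.card n)) ℝ (EuclideanSpace ℝ n)) (j : ℕ)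
    (hj : j ≤ Fintype.card n) (x : EuclideanSpace ℝ n) (l : Fin j) :
    ((colsMat b j hj)ᵀ *ᵥ x.ofLp) l = b.repr x (Fin.castLE hj l) := by
  rw [b.repr_apply_apply, PiLp.inner_apply]
  simp [colsMat, Matrix.mulVec, dotProduct, mul_comm]

lemma exists_good_subspace (A : Matrix m n ℝ) {j : ℕ} (hj1 : 1 ≤ j) (hj : j ≤ Fintype.card n) :
    ∃ G : (Fin j → ℝ) →ₗ[ℝ] (n → ℝ), (∀ y, G y = 0 → y = 0) ∧
      ∀ y, (Matrix.toEuclideanLin A).singularValues (j - 1) * ‖WithLp.toLp 2 (G y)‖ ≤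
        ‖Matrix.toEuclideanLin A (WithLp.toLp 2 (G y))‖ := by
  obtain ⟨b, hb⟩ := exists_svd A
  refine ⟨(colsMat b j hj).mulVecLin, fun y hy => ?_, fun y => ?_⟩
  · ext l
    have := repr_cols b j hj y (Fin.castLE hj l)
    rw [Matrix.mulVecLin_apply] at hy
    rw [hy] at this
    simpa using this.symm
  · refine le_of_sq_le_sq ?_ (norm_nonneg _)
    rw [hb, mul_pow, ← b.repr.norm_map, EuclideanSpace.norm_sq_eq, Finset.mul_sum]
    refine Finset.sum_le_sum fun i _ => ?_
    rw [Real.norm_eq_abs, sq_abs, Matrix.mulVecLin_apply, repr_cols]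
    split_ifs with h
    · have := (Matrix.toEuclideanLin A).singularValues_antitone (show i.1 ≤ j - 1 by omega)
      have h0 := (Matrix.toEuclideanLin A).singularValues_nonneg (j - 1)
      gcongr
    · simp

lemma sval_eq (A : Matrix m n ℝ) {j : ℕ} (hj1 : 1 ≤ j) (hj : j ≤ Fintype.card n) :
    sval A j = (Matrix.toEuclideanLin A).singularValues (j - 1) := by
  have hs0 := (Matrix.toEuclideanLin A).singularValues_nonneg (j - 1)
  apply le_antisymm
  · obtain ⟨b, hb⟩ := exists_svd A
    have hj' : j - 1 ≤ Fintype.card n := by omega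
    set M := colsMat b (j - 1) hj'
    refine (sval_le A (A * M * Mᵀ) ?_).trans ?_
    · have h1 := Matrix.rank_mul_le_right (A * M) Mᵀ
      have h2 := Matrix.rank_le_card_height Mᵀ
      rw [Fintype.card_fin] at h2
      omega
    · refine specNorm_le _ hs0 fun x => ?_
      have e : Matrix.toEuclideanLin (A - A * M * Mᵀ) x =
          Matrix.toEuclideanLin A (x - WithLp.toLp 2 (M *ᵥ (Mᵀ *ᵥ x.ofLp))) := by
        ext a
        simp [Matrix.toLpLin_apply, Matrix.sub_mulVec, Matrix.mulVec_sub, Matrix.mulVec_mulVec,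
          Matrix.mul_assoc]
      rw [e]
      refine le_of_sq_le_sq ?_ (by positivity)
      rw [hb, mul_pow, ← b.repr.norm_map x, EuclideanSpace.norm_sq_eq, Finset.mul_sum]
      refine Finset.sum_le_sum fun i _ => ?_
      rw [Real.norm_eq_abs, sq_abs, map_sub, PiLp.sub_apply, repr_cols]
      split_ifs with h
      · rw [cols_transpose]
        simp only [Fin.castLE_mk, Fin.eta, sub_self]
        rw [zero_pow two_ne_zero, mul_zero]
        positivity
      · have := (Matrix.toEuclideanLin A).singularValues_antitone (show j - 1 ≤ i.1 by omega)
        have h0 := (Matrix.toEuclideanLin A).singularValues_nonneg i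
        rw [sub_zero]
        gcongr
  · obtain ⟨G, hG, hG'⟩ := exists_good_subspace A hj1 hj
    refine le_sval A hj1 fun B hB => ?_
    obtain ⟨y, hy0, hy⟩ := exists_ker B G (by simpa using hB)
    have hne : 0 < ‖WithLp.toLp 2 (G y)‖ := by
      rw [norm_pos_iff]
      intro h
      exact hy0 (hG y (by simpa using h))
    have h1 := hG' y
    have h2 := le_specNorm (A - B) (WithLp.toLp 2 (G y))
    have e : Matrix.toEuclideanLin (A - B) (WithLp.toLp 2 (G y)) =
        Matrix.toEuclideanLin A (WithLp.toLp 2 (G y)) := by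
      simp [Matrix.toLpLin_apply, Matrix.sub_mulVec, hy]
    rw [e] at h2
    exact le_of_mul_le_mul_right (h1.trans h2) hne

lemma vol_eq {k : ℕ} (A : Matrix (Fin k) (Fin k) ℝ) : vol A = |A.det| := by
  have h : vol A ^ 2 = |A.det| ^ 2 := by
    set T := Matrix.toEuclideanLin A with hT
    have hn : Module.finrank ℝ (EuclideanSpace ℝ (Fin k)) = k := by simp
    have hd := T.isSymmetric_adjoint_comp_self.det_eq_prod_eigenvalues hn
    have e1 : vol A = ∏ i : Fin k, T.singularValues i := by
      unfold vol
      simp only [Fintype.card_fin, min_self]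
      rw [← Finset.prod_range (fun i => T.singularValues i), Finset.range_eq_Ico,
        Finset.prod_Ico_eq_prod_range, ← Finset.Ico_add_one_right_eq_Icc,
        Finset.prod_Ico_eq_prod_range]
      simp only [Nat.add_sub_cancel, Nat.sub_zero, zero_add]
      refine Finset.prod_congr rfl fun i hi => ?_
      rw [Finset.mem_range] at hi
      rw [sval_eq A (by omega) (by simp; omega)]
      simp [hT]
    rw [e1, ← Finset.prod_pow]
    simp_rw [T.sq_singularValues_fin hn]
    have hd2 : LinearMap.det T = A.det := LinearMap.det_toLpLin _ _
    have hd3 : LinearMap.det (LinearMap.adjoint T) = A.det := by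
      rw [hT, ← Matrix.toEuclideanLin_conjTranspose_eq_adjoint, LinearMap.det_toLpLin]
      simp
    rw [LinearMap.det_comp, hd2, hd3] at hd
    rw [sq_abs, sq, hd]
    simp
  have h0 : 0 ≤ vol A := Finset.prod_nonneg fun _ _ => sval_nonneg _ _
  exact (sq_eq_sq₀ h0 (abs_nonneg _)).1 h

end Aux

section Aux2

lemma le_specNorm' {m n : Type*} [Fintype m] [Fintype n] [DecidableEq n] (A : Matrix m n ℝ)
    (x : n → ℝ) : ‖WithLp.toLp 2 (A *ᵥ x)‖ ≤ specNorm A * ‖WithLp.toLp 2 x‖ :=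
  le_specNorm A (WithLp.toLp 2 x)

lemma specNorm_le' {m n : Type*} [Fintype m] [Fintype n] [DecidableEq n] (A : Matrix m n ℝ)
    {C : ℝ} (hC : 0 ≤ C)
    (h : ∀ x : n → ℝ, ‖WithLp.toLp 2 (A *ᵥ x)‖ ≤ C * ‖WithLp.toLp 2 x‖) : specNorm A ≤ C :=
  specNorm_le A hC fun x => h x.ofLp

lemma specNorm_sq_le_frob {m n : Type*} [Fintype m] [Fintype n] [DecidableEq n]
    (A : Matrix m n ℝ) : specNorm A ^ 2 ≤ ∑ i, ∑ j, A i j ^ 2 := by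
  have h0 : 0 ≤ ∑ i, ∑ j, A i j ^ 2 := by positivity
  have : specNorm A ≤ √(∑ i, ∑ j, A i j ^ 2) := by
    refine specNorm_le' A (Real.sqrt_nonneg _) fun x => ?_
    refine le_of_sq_le_sq ?_ (by positivity)
    rw [mul_pow, Real.sq_sqrt h0, EuclideanSpace.norm_sq_eq, EuclideanSpace.norm_sq_eq,
      Finset.sum_mul]
    refine Finset.sum_le_sum fun i _ => ?_
    simp only [Real.norm_eq_abs, sq_abs]
    exact Finset.sum_mul_sq_le_sq_mul_sq _ _ _
  calc specNorm A ^ 2 ≤ √(∑ i, ∑ j, A i j ^ 2) ^ 2 :=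
        pow_le_pow_left₀ (specNorm_nonneg A) this 2
    _ = _ := Real.sq_sqrt h0

lemma norm_sq_elim {m n : Type*} [Fintype m] [Fintype n] (x : m → ℝ) (y : n → ℝ) :
    ‖WithLp.toLp 2 (Sum.elim x y)‖ ^ 2 = ‖WithLp.toLp 2 x‖ ^ 2 + ‖WithLp.toLp 2 y‖ ^ 2 := by
  simp [EuclideanSpace.norm_sq_eq]

lemma diffOne_inl {k l : ℕ} : DiffOne (Sum.inl : Fin k → Fin k ⊕ Fin l) Sum.inl :=
  ⟨Sum.inl_injective, by simp⟩

lemma diffOne_update {k l : ℕ} (p : Fin k) (i : Fin l) :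
    DiffOne (Sum.inl : Fin k → Fin k ⊕ Fin l) (Function.update Sum.inl p (Sum.inr i)) := by
  constructor
  · intro a b hab
    by_cases ha : a = p <;> by_cases hb : b = p <;> simp_all [Function.update]
  · refine (Finset.card_le_card (t := {Sum.inr i}) ?_).trans (by simp)
    intro a ha
    simp only [Finset.mem_sdiff, Finset.mem_image, Finset.mem_univ, true_and] at ha
    obtain ⟨⟨b, hb⟩, h2⟩ := ha
    by_cases h : b = p
    · subst h; simp at hb; simp [hb]
    · rw [Function.update_of_ne h] at hb
      exact absurd ⟨b, hb⟩ h2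

variable {k : ℕ}

lemma det_updateRow_one (p : Fin k) (v : Fin k → ℝ) :
    ((1 : Matrix (Fin k) (Fin k) ℝ).updateRow p v).det = v p := by
  rw [← Matrix.cramer_transpose_apply]; simp

lemma det_updateCol_one (p : Fin k) (v : Fin k → ℝ) :
    ((1 : Matrix (Fin k) (Fin k) ℝ).updateCol p v).det = v p := by
  rw [← Matrix.cramer_apply]; simp

lemma adj_row (p i : Fin k) (v : Fin k → ℝ) :
    ((1 : Matrix (Fin k) (Fin k) ℝ).updateRow p v).adjugate i p =
      (1 : Matrix (Fin k) (Fin k) ℝ) i p := by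
  rw [Matrix.adjugate_apply, Matrix.updateRow_idem, det_updateRow_one, Matrix.one_apply,
    Pi.single_apply]
  simp [eq_comm]

lemma adj_col (q i : Fin k) (v : Fin k → ℝ) :
    ((1 : Matrix (Fin k) (Fin k) ℝ).updateCol q v).adjugate q i =
      (1 : Matrix (Fin k) (Fin k) ℝ) q i := by
  have := adj_row q i v
  rw [← Matrix.transpose_one, Matrix.updateRow_transpose, ← Matrix.adjugate_transpose] at this
  exact this

lemma det_add_single (M : Matrix (Fin k) (Fin k) ℝ) (p q : Fin k) (s : ℝ) :
    (M + Matrix.single p q s).det = M.det + s * M.adjugate q p := by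
  have : M + Matrix.single p q s = M.updateRow p (M p + s • Pi.single q 1) := by
    ext a b
    by_cases h : a = p
    · subst h; simp [Matrix.single_apply, Pi.single_apply, eq_comm]
    · simp [Matrix.updateRow_ne h, Matrix.single_apply, Ne.symm h]
  rw [this, Matrix.det_updateRow_add, Matrix.det_updateRow_smul, Matrix.updateRow_eq_self,
    Matrix.adjugate_apply]

lemma det_mixed (A : Matrix (Fin k) (Fin k) ℝ) (p q : Fin k) (v w : Fin k → ℝ) (s : ℝ) :
    ((1 : Matrix (Fin k) (Fin k) ℝ).updateRow p v * A *
      (1 : Matrix (Fin k) (Fin k) ℝ).updateCol q w + Matrix.single p q s).det =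
      v p * w q * A.det + s * A.adjugate q p := by
  rw [det_add_single, Matrix.det_mul, Matrix.det_mul, det_updateRow_one, det_updateCol_one,
    Matrix.adjugate_mul_distrib, Matrix.adjugate_mul_distrib, Matrix.mul_apply]
  simp_rw [adj_col, Matrix.mul_apply, adj_row]
  simp [Matrix.one_apply]
  ring

end Aux2

section Aux3

lemma rank_add_le' {m n : Type*} [Fintype m] [Fintype n] (A B : Matrix m n ℝ) :
    (A + B).rank ≤ A.rank + B.rank := by
  unfold Matrix.rank
  rw [Matrix.mulVecLin_add]
  refine (Submodule.finrank_mono (LinearMap.range_add_le _ _)).trans ?_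
  exact Submodule.finrank_add_le_finrank_add_finrank _ _

variable {k m' n' : ℕ}

lemma updRow_mul (A : Matrix (Fin k) (Fin k) ℝ) (p : Fin k) (v : Fin k → ℝ) :
    (1 : Matrix (Fin k) (Fin k) ℝ).updateRow p v * A = A.updateRow p (v ᵥ* A) := by
  ext a b
  by_cases h : a = p
  · subst h; simp [Matrix.mul_apply, Matrix.vecMul, dotProduct]
  · simp [Matrix.mul_apply, Matrix.updateRow_ne h, Matrix.one_apply]

lemma mul_updCol (A : Matrix (Fin k) (Fin k) ℝ) (p : Fin k) (v : Fin k → ℝ) :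
    A * (1 : Matrix (Fin k) (Fin k) ℝ).updateCol p v = A.updateCol p (A *ᵥ v) := by
  ext a b
  by_cases h : b = p
  · subst h; simp [Matrix.mul_apply, Matrix.mulVec, dotProduct]
  · simp [Matrix.mul_apply, Matrix.updateCol_ne h, Matrix.one_apply]

variable (A11 : Matrix (Fin k) (Fin k) ℝ) (A12 : Matrix (Fin k) (Fin n') ℝ)
    (A21 : Matrix (Fin m') (Fin k) ℝ) (A22 : Matrix (Fin m') (Fin n') ℝ)

lemma row_vec (hinv : IsUnit A11.det) (i : Fin m') :
    (A21 * A11⁻¹) i ᵥ* A11 = A21 i := by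
  have : A21 * A11⁻¹ * A11 = A21 := by rw [Matrix.mul_assoc, Matrix.nonsing_inv_mul _ hinv, Matrix.mul_one]
  ext b
  exact congrFun (congrFun this i) b

lemma col_vec (hinv : IsUnit A11.det) (j : Fin n') :
    A11 *ᵥ (fun l => (A11⁻¹ * A12) l j) = fun l => A12 l j := by
  have : A11 * (A11⁻¹ * A12) = A12 := by rw [← Matrix.mul_assoc, Matrix.mul_nonsing_inv _ hinv, Matrix.one_mul]
  ext b
  exact congrFun (congrFun this b) j

lemma sub_row (hinv : IsUnit A11.det) (p : Fin k) (i : Fin m') :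
    (Matrix.fromBlocks A11 A12 A21 A22).submatrix (Function.update Sum.inl p (Sum.inr i)) Sum.inl =
      (1 : Matrix (Fin k) (Fin k) ℝ).updateRow p ((A21 * A11⁻¹) i) * A11 := by
  rw [updRow_mul, row_vec A11 A21 hinv]
  ext a b
  by_cases h : a = p
  · subst h; simp
  · simp [Matrix.updateRow_ne h, Function.update_of_ne h]

lemma sub_col (hinv : IsUnit A11.det) (q : Fin k) (j : Fin n') :
    (Matrix.fromBlocks A11 A12 A21 A22).submatrix Sum.inl (Function.update Sum.inl q (Sum.inr j)) =
      A11 * (1 : Matrix (Fin k) (Fin k) ℝ).updateCol q (fun l => (A11⁻¹ * A12) l j) := by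
  rw [mul_updCol, col_vec A11 A12 hinv]
  ext a b
  by_cases h : b = q
  · subst h; simp
  · simp [Matrix.updateCol_ne h, Function.update_of_ne h]

lemma sub_both (hinv : IsUnit A11.det) (p q : Fin k) (i : Fin m') (j : Fin n') :
    (Matrix.fromBlocks A11 A12 A21 A22).submatrix (Function.update Sum.inl p (Sum.inr i))
      (Function.update Sum.inl q (Sum.inr j)) =
      (1 : Matrix (Fin k) (Fin k) ℝ).updateRow p ((A21 * A11⁻¹) i) * A11 *
       (1 : Matrix (Fin k) (Fin k) ℝ).updateCol q (fun l => (A11⁻¹ * A12) l j) +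
        Matrix.single p q ((A22 - A21 * A11⁻¹ * A12) i j) := by
  rw [updRow_mul, row_vec A11 A21 hinv, mul_updCol]
  ext a b
  by_cases hb : b = q
  · subst hb
    by_cases ha : a = p
    · subst ha
      have : ((A21 i) ⬝ᵥ fun l => (A11⁻¹ * A12) l j) = (A21 * A11⁻¹ * A12) i j := by
        rw [Matrix.mul_assoc]; rfl
      simp [Matrix.mulVec, this]
    · have := congrFun (col_vec A11 A12 hinv j) a
      simp only [Matrix.mulVec] at this
      simp [Matrix.mulVec, Matrix.updateRow_ne ha, Function.update_of_ne ha, this, Ne.symm ha]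
  · by_cases ha : a = p
    · subst ha
      simp [Matrix.updateCol_ne hb, Function.update_of_ne hb, Ne.symm hb]
    · simp [Matrix.updateCol_ne hb, Function.update_of_ne hb, Matrix.updateRow_ne ha,
        Function.update_of_ne ha, Ne.symm ha]

lemma bounds (hinv : IsUnit A11.det)
    (hmax : ∀ (r : Fin k → Fin k ⊕ Fin m') (c : Fin k → Fin k ⊕ Fin n'),
      DiffOne Sum.inl r → DiffOne Sum.inl c →
      vol ((Matrix.fromBlocks A11 A12 A21 A22).submatrix r c) ≤ vol A11) :
    (∀ i p, |(A21 * A11⁻¹) i p| ≤ 1) ∧ (∀ q j, |(A11⁻¹ * A12) q j| ≤ 1) ∧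
    ∀ i j q p, |(A22 - A21 * A11⁻¹ * A12) i j * A11⁻¹ q p| ≤ 2 := by
  simp_rw [vol_eq] at hmax
  have hd : 0 < |A11.det| := abs_pos.2 hinv.ne_zero
  have h1 : ∀ i p, |(A21 * A11⁻¹) i p| ≤ 1 := by
    intro i p
    have := hmax _ _ (diffOne_update p i) diffOne_inl
    rw [sub_row _ _ _ _ hinv, Matrix.det_mul, det_updateRow_one, abs_mul] at this
    exact (mul_le_iff_le_one_left hd).1 this
  have h2 : ∀ q j, |(A11⁻¹ * A12) q j| ≤ 1 := by
    intro q j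
    have := hmax _ _ diffOne_inl (diffOne_update q j)
    rw [sub_col _ _ _ _ hinv, Matrix.det_mul, det_updateCol_one, abs_mul] at this
    exact (mul_le_iff_le_one_right hd).1 this
  refine ⟨h1, h2, fun i j q p => ?_⟩
  have h3 := hmax _ _ (diffOne_update p i) (diffOne_update q j)
  rw [sub_both _ _ _ _ hinv, det_mixed] at h3
  set s := (A22 - A21 * A11⁻¹ * A12) i j
  have e : A11⁻¹ q p = A11.det⁻¹ * A11.adjugate q p := by
    rw [Matrix.inv_def, Ring.inverse_eq_inv']; rfl
  have h4 : |(A21 * A11⁻¹) i p * (A11⁻¹ * A12) q j * A11.det| ≤ |A11.det| := by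
    rw [abs_mul, abs_mul]
    have := mul_le_one₀ (h1 i p) (abs_nonneg _) (h2 q j)
    nlinarith
  have h5 : |s * A11.adjugate q p| ≤ 2 * |A11.det| := by
    have := abs_sub (((A21 * A11⁻¹) i p * (A11⁻¹ * A12) q j * A11.det) + s * A11.adjugate q p)
      ((A21 * A11⁻¹) i p * (A11⁻¹ * A12) q j * A11.det)
    rw [add_sub_cancel_left] at this
    linarith
  rw [e, show s * (A11.det⁻¹ * A11.adjugate q p) = (s * A11.adjugate q p) / A11.det by
    rw [div_eq_mul_inv]; ring, abs_div, div_le_iff₀ hd]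
  exact h5

lemma norm_bounds (hinv : IsUnit A11.det)
    (hmax : ∀ (r : Fin k → Fin k ⊕ Fin m') (c : Fin k → Fin k ⊕ Fin n'),
      DiffOne Sum.inl r → DiffOne Sum.inl c →
      vol ((Matrix.fromBlocks A11 A12 A21 A22).submatrix r c) ≤ vol A11) :
    specNorm (A21 * A11⁻¹) ^ 2 ≤ k * m' ∧ specNorm (A11⁻¹ * A12) ^ 2 ≤ k * n' ∧
    (specNorm (A22 - A21 * A11⁻¹ * A12) * specNorm A11⁻¹) ^ 2 ≤ (2 * k * m') * (2 * k * n') := by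
  obtain ⟨h1, h2, h3⟩ := bounds A11 A12 A21 A22 hinv hmax
  refine ⟨?_, ?_, ?_⟩
  · refine (specNorm_sq_le_frob _).trans ?_
    calc _ ≤ ∑ i : Fin m', ∑ p : Fin k, (1 : ℝ) := by
          gcongr with i _ p _
          exact (sq_le_one_iff_abs_le_one _).2 (h1 i p)
      _ = _ := by simp [mul_comm]
  · refine (specNorm_sq_le_frob _).trans ?_
    calc _ ≤ ∑ i : Fin k, ∑ p : Fin n', (1 : ℝ) := by
          gcongr with i _ p _
          exact (sq_le_one_iff_abs_le_one _).2 (h2 i p)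
      _ = _ := by simp
  · rw [mul_pow]
    refine (mul_le_mul (specNorm_sq_le_frob _) (specNorm_sq_le_frob _) (by positivity)
      (by positivity)).trans ?_
    simp_rw [Finset.sum_mul, Finset.mul_sum]
    calc _ ≤ ∑ i : Fin m', ∑ j : Fin n', ∑ q : Fin k, ∑ p : Fin k, (4 : ℝ) := by
          gcongr with i _ j _ q _ p _
          have := h3 i j q p
          rw [← mul_pow, ← sq_abs]
          nlinarith [abs_nonneg ((A22 - A21 * A11⁻¹ * A12) i j * A11⁻¹ q p)]
      _ = _ := by simp; ring

end Aux3

section Aux4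

variable {k m' n' : ℕ}

lemma fromBlocks_sub' (A A' : Matrix (Fin k) (Fin k) ℝ) (B B' : Matrix (Fin k) (Fin n') ℝ)
    (C C' : Matrix (Fin m') (Fin k) ℝ) (D D' : Matrix (Fin m') (Fin n') ℝ) :
    Matrix.fromBlocks A B C D - Matrix.fromBlocks A' B' C' D' =
      Matrix.fromBlocks (A - A') (B - B') (C - C') (D - D') := by
  ext i j
  cases i <;> cases j <;> simp

lemma specNorm_lower (P : Matrix (Fin m') (Fin k) ℝ) (s : ℝ) :
    specNorm (Matrix.fromBlocks (s • (1 : Matrix (Fin k) (Fin k) ℝ)) 0 (-P)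
      (1 : Matrix (Fin m') (Fin m') ℝ)) ≤ √(1 + s ^ 2 + specNorm P ^ 2) := by
  refine specNorm_le' _ (Real.sqrt_nonneg _) fun z => ?_
  refine le_of_sq_le_sq ?_ (by positivity)
  obtain ⟨x, y, rfl⟩ : ∃ x y, z = Sum.elim x y := ⟨z ∘ Sum.inl, z ∘ Sum.inr, by simp⟩
  rw [mul_pow, Real.sq_sqrt (by positivity), Matrix.fromBlocks_mulVec, norm_sq_elim, norm_sq_elim]
  simp only [Sum.elim_comp_inl, Sum.elim_comp_inr, Matrix.smul_mulVec, Matrix.one_mulVec,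
    Matrix.zero_mulVec, add_zero, Matrix.neg_mulVec, WithLp.toLp_add, WithLp.toLp_neg,
    WithLp.toLp_smul, norm_smul, mul_pow, Real.norm_eq_abs, sq_abs]
  have h1 := norm_add_le (-WithLp.toLp 2 (P *ᵥ x)) (WithLp.toLp 2 y)
  rw [norm_neg] at h1
  have h2 := le_specNorm' P x
  have h3 := pow_le_pow_left₀ (norm_nonneg _) (h1.trans (add_le_add_left h2 _)) 2
  nlinarith [sq_nonneg (specNorm P * ‖WithLp.toLp 2 y‖ - ‖WithLp.toLp 2 x‖),
    sq_nonneg (s * ‖WithLp.toLp 2 y‖)]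

lemma specNorm_upper (Q : Matrix (Fin k) (Fin n') ℝ) (t : ℝ) :
    specNorm (Matrix.fromBlocks (t • (1 : Matrix (Fin k) (Fin k) ℝ)) (-Q) 0
      (1 : Matrix (Fin n') (Fin n') ℝ)) ≤ √(1 + t ^ 2 + specNorm Q ^ 2) := by
  refine specNorm_le' _ (Real.sqrt_nonneg _) fun z => ?_
  refine le_of_sq_le_sq ?_ (by positivity)
  obtain ⟨x, y, rfl⟩ : ∃ x y, z = Sum.elim x y := ⟨z ∘ Sum.inl, z ∘ Sum.inr, by simp⟩
  rw [mul_pow, Real.sq_sqrt (by positivity), Matrix.fromBlocks_mulVec, norm_sq_elim, norm_sq_elim]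
  simp only [Sum.elim_comp_inl, Sum.elim_comp_inr, Matrix.smul_mulVec, Matrix.one_mulVec,
    Matrix.zero_mulVec, zero_add, Matrix.neg_mulVec, WithLp.toLp_add, WithLp.toLp_neg,
    WithLp.toLp_smul]
  have h1 := norm_add_le (t • WithLp.toLp 2 x) (-WithLp.toLp 2 (Q *ᵥ y))
  rw [norm_neg, norm_smul, Real.norm_eq_abs] at h1
  have h2 := le_specNorm' Q y
  have h3 := pow_le_pow_left₀ (norm_nonneg _) (h1.trans (add_le_add_right h2 _)) 2
  nlinarith [sq_nonneg (specNorm Q * ‖WithLp.toLp 2 x‖ - |t| * ‖WithLp.toLp 2 y‖),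
    sq_nonneg ‖WithLp.toLp 2 x‖, sq_abs t]

lemma sval_corner_le (S : Matrix (Fin m') (Fin n') ℝ) {j : ℕ} (hj : 1 ≤ j) :
    sval (Matrix.fromBlocks (0 : Matrix (Fin k) (Fin k) ℝ) 0 0 S) j ≤ sval S j := by
  refine le_sval S hj fun B hB => ?_
  have e : Matrix.fromBlocks (0 : Matrix (Fin k) (Fin k) ℝ) 0 0 B =
      Matrix.fromRows (0 : Matrix (Fin k) (Fin m') ℝ) (1 : Matrix (Fin m') (Fin m') ℝ) *
        (B * Matrix.fromCols (0 : Matrix (Fin n') (Fin k) ℝ) 1) := by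
    rw [Matrix.mul_fromCols, Matrix.fromRows_mul_fromCols]
    simp
  refine (sval_le _ (Matrix.fromBlocks (0 : Matrix (Fin k) (Fin k) ℝ) 0 0 B) ?_).trans ?_
  · rw [e]
    exact (((Matrix.rank_mul_le_right _ _).trans (Matrix.rank_mul_le_left _ _))).trans_lt hB
  · rw [fromBlocks_sub']
    refine specNorm_le' _ (specNorm_nonneg _) fun z => ?_
    obtain ⟨x, y, rfl⟩ : ∃ x y, z = Sum.elim x y := ⟨z ∘ Sum.inl, z ∘ Sum.inr, by simp⟩
    have h2 := le_specNorm' (S - B) y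
    have h3 : ‖WithLp.toLp 2 y‖ ≤ ‖WithLp.toLp 2 (Sum.elim x y)‖ := by
      refine le_of_sq_le_sq ?_ (norm_nonneg _)
      rw [norm_sq_elim]
      nlinarith [sq_nonneg ‖WithLp.toLp 2 x‖]
    have h4 : ‖WithLp.toLp 2 (Matrix.fromBlocks (0 - 0 : Matrix (Fin k) (Fin k) ℝ) (0 - 0) (0 - 0)
        (S - B) *ᵥ Sum.elim x y)‖ = ‖WithLp.toLp 2 ((S - B) *ᵥ y)‖ := by
      refine (sq_eq_sq₀ (norm_nonneg _) (norm_nonneg _)).1 ?_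
      rw [Matrix.fromBlocks_mulVec, norm_sq_elim]
      simp
    rw [h4]
    exact h2.trans (mul_le_mul_of_nonneg_left h3 (specNorm_nonneg _))

lemma sval_S_le (A : Matrix (Fin k ⊕ Fin m') (Fin k ⊕ Fin n') ℝ)
    (L : Matrix (Fin k ⊕ Fin m') (Fin k ⊕ Fin m') ℝ)
    (U : Matrix (Fin k ⊕ Fin n') (Fin k ⊕ Fin n') ℝ)
    (A11 : Matrix (Fin k) (Fin k) ℝ) (S : Matrix (Fin m') (Fin n') ℝ) (β : ℝ) (hβ : 0 ≤ β)
    (hLAU : L * A * U = Matrix.fromBlocks (β • A11) 0 0 S)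
    (hinv : IsUnit A11.det) (hS : specNorm S * specNorm A11⁻¹ ≤ β) {j : ℕ} (hj1 : 1 ≤ j)
    (hj : j ≤ n') {C : ℝ} (hC0 : 0 < C) (hC : specNorm L * specNorm U ≤ C) :
    sval S j ≤ C * sval A (k + j) := by
  rw [← div_le_iff₀' hC0]
  refine le_sval A (by omega) fun B hB => ?_
  rw [div_le_iff₀' hC0]
  obtain ⟨G, hG, hG'⟩ := exists_good_subspace S hj1 (by simpa using hj)
  rw [← sval_eq S hj1 (by simpa using hj)] at hG'
  let H : ((Fin k → ℝ) × (Fin j → ℝ)) →ₗ[ℝ] (Fin k ⊕ Fin n' → ℝ) :=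
    { toFun := fun v => Sum.elim v.1 (G v.2)
      map_add' := by
        intro v w
        ext a
        cases a <;> simp
      map_smul' := by
        intro c v
        ext a
        cases a <;> simp }
  have hrank : (L * B * U).rank < Module.finrank ℝ ((Fin k → ℝ) × (Fin j → ℝ)) := by
    rw [Module.finrank_prod, Module.finrank_fin_fun, Module.finrank_fin_fun]
    exact ((Matrix.rank_mul_le_left _ _).trans (Matrix.rank_mul_le_right _ _)).trans_lt hB
  obtain ⟨⟨x, y⟩, hv0, hv⟩ := exists_ker (L * B * U) H hrank
  set z : Fin k ⊕ Fin n' → ℝ := Sum.elim x (G y) with hz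
  have hHz : H (x, y) = z := rfl
  rw [hHz] at hv
  have hzpos : 0 < ‖WithLp.toLp 2 z‖ := by
    rw [norm_pos_iff]
    intro h
    have h0 : z = 0 := by simpa using h
    apply hv0
    have hx : x = 0 := by
      ext a; simpa [hz] using congrFun h0 (Sum.inl a)
    have hy : G y = 0 := by
      ext a; simpa [hz] using congrFun h0 (Sum.inr a)
    rw [hx, hG y hy]; rfl
  have hσ : sval S j ≤ specNorm S := by
    have := sval_le S 0 (j := j) (by rw [Matrix.rank_zero]; omega)
    simpa using this
  have hσ0 := sval_nonneg S j
  have hx : sval S j * ‖WithLp.toLp 2 x‖ ≤ β * ‖WithLp.toLp 2 (A11 *ᵥ x)‖ := by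
    have h1 := le_specNorm' A11⁻¹ (A11 *ᵥ x)
    rw [Matrix.mulVec_mulVec, Matrix.nonsing_inv_mul _ hinv, Matrix.one_mulVec] at h1
    calc sval S j * ‖WithLp.toLp 2 x‖ ≤
        specNorm S * (specNorm A11⁻¹ * ‖WithLp.toLp 2 (A11 *ᵥ x)‖) :=
          mul_le_mul hσ h1 (norm_nonneg _) (specNorm_nonneg _)
      _ ≤ _ := by
          rw [← mul_assoc]
          exact mul_le_mul_of_nonneg_right hS (norm_nonneg _)
  have hDz : sval S j * ‖WithLp.toLp 2 z‖ ≤ ‖WithLp.toLp 2 ((L * A * U) *ᵥ z)‖ := by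
    refine le_of_sq_le_sq ?_ (norm_nonneg _)
    rw [hLAU, Matrix.fromBlocks_mulVec, norm_sq_elim, mul_pow, hz, norm_sq_elim]
    simp only [Sum.elim_comp_inl, Sum.elim_comp_inr, Matrix.smul_mulVec, Matrix.zero_mulVec,
      zero_add, add_zero, WithLp.toLp_smul, norm_smul, Real.norm_eq_abs, abs_of_nonneg hβ]
    have h1 := pow_le_pow_left₀ (by positivity) hx 2
    have h2 := pow_le_pow_left₀ (by positivity) (hG' y) 2
    have e : Matrix.toEuclideanLin S (WithLp.toLp 2 (G y)) = WithLp.toLp 2 (S *ᵥ G y) := rfl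
    rw [e] at h2
    rw [mul_pow] at h1 h2
    linarith
  have hsub : (L * A * U) *ᵥ z = L *ᵥ ((A - B) *ᵥ (U *ᵥ z)) := by
    rw [Matrix.mulVec_mulVec, Matrix.mulVec_mulVec, Matrix.mul_sub, Matrix.sub_mul,
      Matrix.sub_mulVec, hv, sub_zero]
  have hfin : ‖WithLp.toLp 2 ((L * A * U) *ᵥ z)‖ ≤ (C * specNorm (A - B)) * ‖WithLp.toLp 2 z‖ := by
    rw [hsub]
    have hL := specNorm_nonneg L
    have hAB := specNorm_nonneg (A - B)
    calc _ ≤ specNorm L * (specNorm (A - B) * (specNorm U * ‖WithLp.toLp 2 z‖)) := by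
          refine (le_specNorm' _ _).trans ?_
          gcongr
          refine (le_specNorm' _ _).trans ?_
          gcongr
          exact le_specNorm' _ _
      _ = (specNorm L * specNorm U) * (specNorm (A - B) * ‖WithLp.toLp 2 z‖) := by ring
      _ ≤ C * (specNorm (A - B) * ‖WithLp.toLp 2 z‖) := by gcongr
      _ = _ := by ring
  exact le_of_mul_le_mul_right (hDz.trans hfin) hzpos

lemma const_bound (k m' n' : ℕ) :
    √(1 + 3 * k * m') * √(1 + 3 * k * n') ≤
      1 + 5 * k * √(((k : ℝ) + m') * (k + n')) := by
  refine le_of_sq_le_sq ?_ (by positivity)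
  have hX : 0 ≤ (k : ℝ) * √(((k : ℝ) + m') * (k + n')) := by positivity
  have hX2 : (k * √(((k : ℝ) + m') * (k + n'))) ^ 2 = (k : ℝ) ^ 2 * ((k + m') * (k + n')) := by
    rw [mul_pow, Real.sq_sqrt (by positivity)]
  rw [mul_assoc (5 : ℝ)]
  generalize (k : ℝ) * √(((k : ℝ) + m') * (k + n')) = X at hX hX2
  rw [mul_pow, Real.sq_sqrt (by positivity), Real.sq_sqrt (by positivity)]
  have hk : (k : ℝ) ≤ (k : ℝ) ^ 3 := by exact_mod_cast Nat.le_self_pow (by norm_num) k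
  have h1 : (k : ℝ) * (m' + n') ≤ (k : ℝ) ^ 3 * (m' + n') := by gcongr
  have h2 : (0 : ℝ) ≤ (k : ℝ) ^ 4 := by positivity
  have h3 : (0 : ℝ) ≤ (k : ℝ) * (m' + n') := by positivity
  nlinarith

end Aux4

theorem statement_2 {k m' n' : ℕ}
    (A11 : Matrix (Fin k) (Fin k) ℝ) (A12 : Matrix (Fin k) (Fin n') ℝ)
    (A21 : Matrix (Fin m') (Fin k) ℝ) (A22 : Matrix (Fin m') (Fin n') ℝ)
    (hinv : IsUnit A11.det)
    (hpos : 0 < vol A11)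
    (hmax : ∀ (r : Fin k → Fin k ⊕ Fin m') (c : Fin k → Fin k ⊕ Fin n'),
      DiffOne Sum.inl r → DiffOne Sum.inl c →
      vol ((Matrix.fromBlocks A11 A12 A21 A22).submatrix r c) ≤ vol A11) :
    ∀ j : ℕ, 1 ≤ j → j ≤ min (k + m') (k + n') - k →
      sval (Matrix.fromBlocks A11 A12 A21 A22) (k + j) ≤
        sval (Matrix.fromBlocks A11 A12 A21 A22
              - Matrix.fromBlocks A11 A12 A21 (A21 * A11⁻¹ * A12)) j ∧
      sval (Matrix.fromBlocks A11 A12 A21 A22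
              - Matrix.fromBlocks A11 A12 A21 (A21 * A11⁻¹ * A12)) j ≤
        (1 + 5 * k * Real.sqrt ((k + m') * (k + n'))) *
          sval (Matrix.fromBlocks A11 A12 A21 A22) (k + j) := by
  intro j hj1 hj
  have hjn : j ≤ n' := by omega
  have hE : Matrix.fromBlocks A11 A12 A21 A22
      - Matrix.fromBlocks A11 A12 A21 (A21 * A11⁻¹ * A12) =
      Matrix.fromBlocks 0 0 0 (A22 - A21 * A11⁻¹ * A12) := by
    rw [fromBlocks_sub']; simp
  constructor
  · refine le_sval _ hj1 fun B hB => ?_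
    have hAk : Matrix.fromBlocks A11 A12 A21 (A21 * A11⁻¹ * A12) =
        Matrix.fromRows 1 (A21 * A11⁻¹) * Matrix.fromCols A11 A12 := by
      rw [Matrix.fromRows_mul_fromCols, Matrix.one_mul, Matrix.one_mul, Matrix.mul_assoc A21 A11⁻¹ A11,
        Matrix.nonsing_inv_mul _ hinv, Matrix.mul_one]
    have hr : (Matrix.fromBlocks A11 A12 A21 (A21 * A11⁻¹ * A12)).rank ≤ k := by
      rw [hAk]
      refine (Matrix.rank_mul_le_right _ _).trans ?_
      simpa using Matrix.rank_le_card_height (Matrix.fromCols A11 A12)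
    have h1 := rank_add_le' (Matrix.fromBlocks A11 A12 A21 (A21 * A11⁻¹ * A12)) B
    have h2 := sval_le (Matrix.fromBlocks A11 A12 A21 A22)
      (Matrix.fromBlocks A11 A12 A21 (A21 * A11⁻¹ * A12) + B) (j := k + j) (by omega)
    rwa [← sub_sub] at h2
  · obtain ⟨hP, hQ, hS⟩ := norm_bounds A11 A12 A21 A22 hinv hmax
    rw [hE]
    refine (sval_corner_le _ hj1).trans ?_
    refine sval_S_le _
      (Matrix.fromBlocks (√(2 * k * m') • 1) 0 (-(A21 * A11⁻¹)) 1)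
      (Matrix.fromBlocks (√(2 * k * n') • 1) (-(A11⁻¹ * A12)) 0 1)
      A11 _ (√(2 * k * m') * √(2 * k * n')) (by positivity) ?_ hinv ?_ hj1 hjn (by positivity) ?_
    · have e1 : A21 * A11⁻¹ * A11 = A21 := by
        rw [Matrix.mul_assoc, Matrix.nonsing_inv_mul _ hinv, Matrix.mul_one]
      have e2 : A11 * (A11⁻¹ * A12) = A12 := by
        rw [← Matrix.mul_assoc, Matrix.mul_nonsing_inv _ hinv, Matrix.one_mul]
      rw [Matrix.fromBlocks_multiply, Matrix.fromBlocks_multiply]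
      simp only [Matrix.smul_mul, Matrix.mul_smul, Matrix.one_mul, Matrix.mul_one, Matrix.zero_mul,
        Matrix.mul_zero, add_zero, zero_add, Matrix.neg_mul, Matrix.mul_neg, e1, e2, smul_smul]
      congr 1
      · rw [mul_comm]
      · simp
      · simp
      · simp [sub_eq_neg_add]
    · refine le_of_sq_le_sq ?_ (by positivity)
      rw [mul_pow (√_), Real.sq_sqrt (by positivity), Real.sq_sqrt (by positivity)]
      exact hS
    · refine le_trans ?_ (const_bound k m' n')
      refine mul_le_mul ((specNorm_lower _ _).trans ?_) ((specNorm_upper _ _).trans ?_)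
        (specNorm_nonneg _) (Real.sqrt_nonneg _)
      · apply Real.sqrt_le_sqrt
        rw [Real.sq_sqrt (by positivity)]
        linarith
      · apply Real.sqrt_le_sqrt
        rw [Real.sq_sqrt (by positivity)]
        linarith
end

section
/- For integers m, n ≥ k ≥ 2, let A ∈ ℝ^{m×n} be the matrix with entries A_{ii} = k+1 for 1 ≤ i ≤ k, A_{ij} = k+1 whenever both i > k and j > k, and A_{ij} = −1 otherwise. Then the principal k×k submatrix A11 = A(1:k, 1:k) (the matrix with k+1 on the diagonal and −1 off the diagonal) is a local maximum volume k×k submatrix of A: det(A11) ≠ 0 and vol(Â11) ≤ vol(A11) for every k×k submatrix Â11 of A that differs from A11 in at most one row and at most one column. -/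
open Matrix

/-- The k×k pivot block of the example: k+1 on the diagonal, -1 off the diagonal. -/
noncomputable def egA11 (k : ℕ) : Matrix (Fin k) (Fin k) ℝ :=
  Matrix.of fun i j => if i = j then (k : ℝ) + 1 else -1

/-- The example matrix: A_{ii} = k+1 for i ≤ k, A_{ij} = k+1 for i,j > k,
and A_{ij} = -1 otherwise (written in block form, m = k + m', n = k + n'). -/
noncomputable def egA (k m' n' : ℕ) : Matrix (Fin k ⊕ Fin m') (Fin k ⊕ Fin n') ℝ :=
  Matrix.fromBlocks (egA11 k) (Matrix.of fun _ _ => -1) (Matrix.of fun _ _ => -1)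
    (Matrix.of fun _ _ => (k : ℝ) + 1)

theorem s15_norm_sq {n : Type*} [Fintype n] (x : EuclideanSpace ℝ n) :
    ‖x‖ ^ 2 = x.ofLp ⬝ᵥ x.ofLp := by
  rw [EuclideanSpace.real_norm_sq_eq]
  simp [dotProduct, sq]

theorem s15_specNorm_le {m n : Type*} [Fintype m] [Fintype n] [DecidableEq n]
    (A : Matrix m n ℝ) (c : ℝ) (hc : 0 ≤ c)
    (h : ∀ v : n → ℝ, (A *ᵥ v) ⬝ᵥ (A *ᵥ v) ≤ c ^ 2 * (v ⬝ᵥ v)) : specNorm A ≤ c := by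
  unfold specNorm
  refine ContinuousLinearMap.opNorm_le_bound _ hc fun x => ?_
  apply le_of_sq_le_sq _ (by positivity)
  rw [mul_pow, s15_norm_sq, s15_norm_sq]
  simpa using h x.ofLp

theorem s15_le_specNorm {m n : Type*} [Fintype m] [Fintype n] [DecidableEq n]
    (A : Matrix m n ℝ) (c : ℝ) (v : n → ℝ) (hv : v ≠ 0)
    (h : c ^ 2 * (v ⬝ᵥ v) ≤ (A *ᵥ v) ⬝ᵥ (A *ᵥ v)) : c ≤ specNorm A := by
  unfold specNorm
  set T := LinearMap.toContinuousLinearMap (Matrix.toEuclideanLin A) with hT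
  set x : EuclideanSpace ℝ n := WithLp.toLp 2 v with hx
  have hx0 : x ≠ 0 := by
    intro h0
    apply hv
    have := congrArg WithLp.ofLp h0
    simpa [hx] using this
  have hpos : 0 < ‖x‖ := norm_pos_iff.mpr hx0
  have h1 := T.le_opNorm x
  have h2 : (c * ‖x‖) ^ 2 ≤ ‖T x‖ ^ 2 := by
    rw [mul_pow, s15_norm_sq, s15_norm_sq]
    simpa [hT, hx] using h
  have h3 : c * ‖x‖ ≤ ‖T x‖ := le_of_sq_le_sq h2 (norm_nonneg _)
  exact le_of_mul_le_mul_right (h3.trans h1) hpos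

theorem s15_specNorm_nonneg {m n : Type*} [Fintype m] [Fintype n] [DecidableEq n]
    (A : Matrix m n ℝ) : 0 ≤ specNorm A := norm_nonneg _

theorem s15_sval_nonneg {m n : Type*} [Fintype m] [Fintype n] [DecidableEq n]
    (A : Matrix m n ℝ) (j : ℕ) : 0 ≤ sval A j := by
  apply Real.sInf_nonneg
  rintro x ⟨B, -, rfl⟩
  exact s15_specNorm_nonneg _

theorem s15_sval_le {m n : Type*} [Fintype m] [Fintype n] [DecidableEq n]
    (A B : Matrix m n ℝ) (j : ℕ) (hB : B.rank < j) : sval A j ≤ specNorm (A - B) := by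
  apply csInf_le
  · refine ⟨0, ?_⟩
    rintro x ⟨B, -, rfl⟩
    exact s15_specNorm_nonneg _
  · exact ⟨B, hB, rfl⟩

theorem s15_le_sval {m n : Type*} [Fintype m] [Fintype n] [DecidableEq n]
    (A : Matrix m n ℝ) (j : ℕ) (hj : 1 ≤ j) (c : ℝ)
    (h : ∀ B : Matrix m n ℝ, B.rank < j → c ≤ specNorm (A - B)) : c ≤ sval A j := by
  apply le_csInf
  · exact ⟨_, 0, by rw [rank_zero]; omega, rfl⟩
  · rintro x ⟨B, hB, rfl⟩
    exact h B hB

theorem s15_vol_eq {k : ℕ} (A : Matrix (Fin k) (Fin k) ℝ) :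
    vol A = ∏ j ∈ Finset.range k, sval A (j + 1) := by
  unfold vol
  rw [Finset.range_eq_Ico, Finset.prod_Ico_add' (fun j => sval A j) 0 k 1]
  congr 1
  ext x
  simp

/-- The singular values are bounded by the square roots of the eigenvalues of `Aᵀ A`. -/
theorem s15_sval_le_eig {k : ℕ} (A : Matrix (Fin k) (Fin k) ℝ)
    (H : (Aᴴ * A).IsHermitian) (i : Fin (Fintype.card (Fin k)))
    (hnn : 0 ≤ H.eigenvalues₀ i) :
    sval A (i.val + 1) ≤ √(H.eigenvalues₀ i) := by
  set e : Fin (Fintype.card (Fin k)) ≃ Fin k :=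
    (Fintype.equivOfCardEq (Fintype.card_fin _)) with he
  have hev : ∀ a, H.eigenvalues a = H.eigenvalues₀ (e.symm a) := fun a => rfl
  set U : Matrix (Fin k) (Fin k) ℝ := (H.eigenvectorUnitary : Matrix (Fin k) (Fin k) ℝ) with hU
  have hst : ∀ M : Matrix (Fin k) (Fin k) ℝ, star M = Mᵀ :=
    fun M => conjTranspose_eq_transpose_of_trivial M
  have hUU : U * Uᵀ = 1 := by
    have h : U * star U = 1 := Unitary.mul_star_self_of_mem H.eigenvectorUnitary.2
    rwa [hst] at h
  have hUU' : Uᵀ * U = 1 := by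
    have h : star U * U = 1 := Unitary.star_mul_self_of_mem H.eigenvectorUnitary.2
    rwa [hst] at h
  have hdiag : Uᵀ * (Aᵀ * A) * U = diagonal H.eigenvalues := by
    have h := H.spectral_theorem
    rw [Unitary.conjStarAlgAut_apply] at h
    have h' : Aᵀ * A = U * diagonal H.eigenvalues * Uᵀ := by
      rw [← hst, ← hst]
      exact h
    rw [h']
    calc Uᵀ * (U * diagonal H.eigenvalues * Uᵀ) * U
        = (Uᵀ * U) * diagonal H.eigenvalues * (Uᵀ * U) := by simp only [Matrix.mul_assoc]
      _ = _ := by simp [hUU']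
  set d : Fin k → ℝ := fun a => if e.symm a < i then 1 else 0 with hd
  have hrank : (A * U * diagonal d * Uᵀ).rank < i.val + 1 := by
    have h1 : (A * U * diagonal d * Uᵀ).rank ≤ (diagonal d).rank :=
      (rank_mul_le_left _ _).trans (rank_mul_le_right _ _)
    have h2 : (diagonal d).rank ≤ i.val := by
      rw [rank_diagonal]
      have : Fintype.card {a // d a ≠ 0} ≤ Fintype.card (Fin i.val) := by
        refine Fintype.card_le_of_injective
          (fun a => ⟨(e.symm a.1).val, ?_⟩) ?_
        · by_contra hcon
          apply a.2
          have : ¬ e.symm a.1 < i := fun h => hcon h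
          simp [hd, this]
        · intro a b hab
          simp only [Fin.mk.injEq] at hab
          exact Subtype.ext (e.symm.injective (Fin.ext hab))
      simpa using this
    omega
  refine (s15_sval_le A _ _ hrank).trans ?_
  apply s15_specNorm_le _ _ (Real.sqrt_nonneg _)
  intro v
  rw [Real.sq_sqrt hnn]
  set y : Fin k → ℝ := Uᵀ *ᵥ v with hy
  set z : Fin k → ℝ := fun a => (1 - d a) * y a with hz
  have hAv : (A - A * U * diagonal d * Uᵀ) *ᵥ v = A *ᵥ (U *ᵥ z) := by
    have hz' : z = (1 - diagonal d) *ᵥ y := by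
      ext a
      simp [hz, sub_mulVec, mulVec_diagonal]
      ring
    rw [hz', hy, mulVec_mulVec, mulVec_mulVec, mulVec_mulVec]
    congr 1
    simp only [Matrix.sub_mul, Matrix.mul_sub, Matrix.one_mul, hUU, Matrix.mul_one,
      Matrix.mul_assoc]
  have hvv : v ⬝ᵥ v = y ⬝ᵥ y := by
    rw [hy, dotProduct_mulVec, vecMul_transpose, mulVec_mulVec, hUU, one_mulVec]
  have hzz : (A *ᵥ (U *ᵥ z)) ⬝ᵥ (A *ᵥ (U *ᵥ z)) = z ⬝ᵥ (diagonal H.eigenvalues *ᵥ z) := by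
    have aux : ∀ (M : Matrix (Fin k) (Fin k) ℝ) (x y : Fin k → ℝ),
        (M *ᵥ x) ⬝ᵥ y = x ⬝ᵥ (Mᵀ *ᵥ y) := by
      intro M x y
      rw [dotProduct_mulVec, vecMul_transpose]
    rw [← hdiag, aux, aux]
    simp only [mulVec_mulVec, Matrix.mul_assoc]
  rw [hAv, hvv, hzz, dotProduct, dotProduct, Finset.mul_sum]
  apply Finset.sum_le_sum
  intro a _
  rw [mulVec_diagonal, hz, hd]
  by_cases hlt : e.symm a < i
  · simp only [hlt, if_true]
    have := mul_nonneg hnn (mul_self_nonneg (y a))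
    simpa using this
  · simp only [hlt, if_false]
    have h1 : H.eigenvalues a ≤ H.eigenvalues₀ i := by
      rw [hev]
      exact H.eigenvalues₀_antitone (not_lt.mp hlt)
    nlinarith [mul_le_mul_of_nonneg_right h1 (mul_self_nonneg (y a))]

theorem s15_vol_le {k : ℕ} (A : Matrix (Fin k) (Fin k) ℝ) : vol A ≤ |A.det| := by
  have H : (Aᴴ * A).IsHermitian := isHermitian_conjTranspose_mul_self A
  have hps : (Aᴴ * A).PosSemidef := posSemidef_conjTranspose_mul_self A
  set e : Fin (Fintype.card (Fin k)) ≃ Fin k :=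
    (Fintype.equivOfCardEq (Fintype.card_fin _)) with he
  have hev : ∀ a, H.eigenvalues (e a) = H.eigenvalues₀ a := fun a => by
    show H.eigenvalues₀ (e.symm (e a)) = _
    simp
  have hnn : ∀ a, 0 ≤ H.eigenvalues₀ a := fun a => by
    rw [← hev]; exact hps.eigenvalues_nonneg _
  have hdet : A.det ^ 2 = ∏ a, H.eigenvalues₀ a := by
    have h1 := H.det_eq_prod_eigenvalues
    rw [← e.prod_comp] at h1
    simp only [hev] at h1
    simpa [sq] using h1
  have hv : vol A = ∏ i : Fin (Fintype.card (Fin k)), sval A (i.val + 1) := by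
    rw [s15_vol_eq, Finset.prod_range]
    have hc : Fintype.card (Fin k) = k := Fintype.card_fin k
    rw [← (finCongr hc).prod_comp]
    rfl
  rw [hv, ← Real.sqrt_sq_eq_abs, hdet]
  rw [Real.sqrt_prod _ (fun a _ => hnn a)]
  exact Finset.prod_le_prod (fun i _ => s15_sval_nonneg _ _)
    (fun i _ => s15_sval_le_eig A H i (hnn i))

theorem s15_mulVec (k : ℕ) (v : Fin k → ℝ) (i : Fin k) :
    (egA11 k *ᵥ v) i = ((k : ℝ) + 2) * v i - ∑ j, v j := by
  have : ∀ j, egA11 k i j * v j = (if i = j then ((k : ℝ) + 2) * v j else 0) - v j := by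
    intro j
    simp only [egA11, of_apply]
    split_ifs <;> ring
  simp [mulVec, dotProduct, this]

theorem s15_norm_A11 (k : ℕ) (v : Fin k → ℝ) :
    (egA11 k *ᵥ v) ⬝ᵥ (egA11 k *ᵥ v) =
      ((k : ℝ) + 2) ^ 2 * (v ⬝ᵥ v) - (k + 4) * (∑ j, v j) ^ 2 := by
  simp only [dotProduct, s15_mulVec]
  generalize hs : ∑ j, v j = s
  have : ∀ i, (((k : ℝ) + 2) * v i - s) * (((k : ℝ) + 2) * v i - s) =
      ((k : ℝ) + 2) ^ 2 * (v i * v i) - (2 * (k + 2) * s) * v i + s ^ 2 := fun i => by ring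
  simp only [this, Finset.sum_add_distrib, Finset.sum_sub_distrib, ← Finset.mul_sum, hs]
  simp
  ring

theorem s15_le_sval_A11 (k j : ℕ) (hj : j < k) :
    (if j + 1 < k then (k : ℝ) + 2 else 2) ≤ sval (egA11 k) (j + 1) := by
  apply s15_le_sval _ _ (by omega)
  intro B hB
  split_ifs with hjk
  · set φ : (Fin k → ℝ) →ₗ[ℝ] (LinearMap.range B.mulVecLin × ℝ) :=
      B.mulVecLin.rangeRestrict.prod (∑ i, LinearMap.proj i) with hφ
    have hker : LinearMap.ker φ ≠ ⊥ := by
      apply LinearMap.ker_ne_bot_of_finrank_lt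
      have : Module.finrank ℝ (LinearMap.range B.mulVecLin) = B.rank := rfl
      simp [this]
      omega
    obtain ⟨v, hv, hv0⟩ := Submodule.exists_mem_ne_zero_of_ne_bot hker
    have hv' : φ v = 0 := hv
    have h1 : B *ᵥ v = 0 := by
      have := congrArg (fun p => (p.1 : Fin k → ℝ)) hv'
      simpa [hφ] using this
    have h2 : ∑ j, v j = 0 := by
      have := congrArg (fun p => p.2) hv'
      simpa [hφ] using this
    apply s15_le_specNorm _ _ v hv0
    rw [sub_mulVec, h1, sub_zero, s15_norm_A11, h2]
    simp
  · have hker : LinearMap.ker B.mulVecLin.rangeRestrict ≠ ⊥ := by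
      apply LinearMap.ker_ne_bot_of_finrank_lt
      have : Module.finrank ℝ (LinearMap.range B.mulVecLin) = B.rank := rfl
      simp [this]
      omega
    obtain ⟨v, hv, hv0⟩ := Submodule.exists_mem_ne_zero_of_ne_bot hker
    have h1 : B *ᵥ v = 0 := by
      have hv' : B.mulVecLin.rangeRestrict v = 0 := hv
      have := congrArg Subtype.val hv'
      simpa using this
    apply s15_le_specNorm _ _ v hv0
    rw [sub_mulVec, h1, sub_zero, s15_norm_A11]
    have hcs : (∑ j, v j) ^ 2 ≤ k * (v ⬝ᵥ v) := by
      have := sq_sum_le_card_mul_sum_sq (s := Finset.univ) (f := v)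
      simpa [dotProduct, sq] using this
    have h4 : (0 : ℝ) ≤ k + 4 := by positivity
    nlinarith [mul_le_mul_of_nonneg_left hcs h4]

theorem s15_vol_A11 (k : ℕ) (hk : 1 ≤ k) : 2 * ((k : ℝ) + 2) ^ (k - 1) ≤ vol (egA11 k) := by
  obtain ⟨l, rfl⟩ : ∃ l, k = l + 1 := ⟨k - 1, by omega⟩
  rw [s15_vol_eq]
  refine le_trans (le_of_eq ?_) (Finset.prod_le_prod (fun j _ => ?_)
    (fun j hj => s15_le_sval_A11 (l + 1) j (Finset.mem_range.mp hj)))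
  · rw [Finset.prod_range_succ, Finset.prod_congr rfl (g := fun _ => ((l + 1 : ℕ) : ℝ) + 2)]
    · simp; ring
    · intro x hx
      have := Finset.mem_range.mp hx
      simp [this]
  · split_ifs <;> positivity

theorem s15_det_A11 (k : ℕ) (hk : 1 ≤ k) : (egA11 k).det = 2 * ((k : ℝ) + 2) ^ (k - 1) := by
  have hk2 : ((k : ℝ) + 2) ≠ 0 := by positivity
  have h : egA11 k = ((k : ℝ) + 2) • (1 + replicateCol Unit (fun _ : Fin k => -1 / ((k : ℝ) + 2)) *
      replicateRow Unit (fun _ : Fin k => (1 : ℝ))) := by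
    ext i j
    by_cases hij : i = j
    · simp [egA11, hij, Matrix.mul_apply]; field_simp; ring
    · simp [egA11, hij, Matrix.mul_apply]; field_simp
  rw [h, det_smul, det_one_add_replicateCol_mul_replicateRow]
  obtain ⟨l, rfl⟩ : ∃ l, k = l + 1 := ⟨k - 1, by omega⟩
  simp [dotProduct]
  push_cast at hk2
  rw [pow_succ]
  field_simp
  ring

/-- `egA11` with the `(i, i)` entry replaced by `-1`. -/
theorem s15_det_A11' (k : ℕ) (i : Fin k) :
    (Matrix.of fun p q : Fin k => if p = q ∧ p ≠ i then (k : ℝ) + 1 else -1).det =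
      (egA11 k).det * (-1 / 2) := by
  have hk2 : ((k : ℝ) + 2) ≠ 0 := by positivity
  set w : Fin k → ℝ := fun a => -((if a = i then 1 else 0) + 1 / 2) with hw
  have h : (Matrix.of fun p q : Fin k => if p = q ∧ p ≠ i then (k : ℝ) + 1 else -1) =
      egA11 k * (1 + replicateCol Unit w * replicateRow Unit (Pi.single i (1 : ℝ))) := by
    rw [Matrix.mul_add, Matrix.mul_one, ← Matrix.mul_assoc, ← replicateCol_mulVec]
    ext p q
    have hs : ∑ j, w j = -(1 + (k : ℝ) / 2) := by
      simp [hw, Finset.sum_add_distrib]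
      ring
    simp only [of_apply, Matrix.add_apply, Matrix.mul_apply, replicateCol_apply,
      replicateRow_apply, s15_mulVec, hs, Pi.single_apply]
    clear hs
    simp only [hw, egA11, of_apply]
    by_cases h1 : p = q <;> by_cases h2 : q = i <;> by_cases h3 : p = i <;>
      simp_all <;> ring
  rw [h, det_mul, det_one_add_replicateCol_mul_replicateRow]
  simp [hw]
  ring

/-- Collapse the extra indices to a single one. -/
def s15Col (k l : ℕ) : Fin k ⊕ Fin l → Option (Fin k) := Sum.elim some (fun _ => none)

theorem s15_col_inj (k l : ℕ) (r : Fin k → Fin k ⊕ Fin l) (h : DiffOne Sum.inl r) :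
    Function.Injective (s15Col k l ∘ r) := by
  obtain ⟨hr, hc⟩ := h
  intro p q hpq
  apply hr
  rw [Finset.card_le_one] at hc
  simp only [Function.comp] at hpq
  rcases hp : r p with a | a <;> rcases hq : r q with b | b
  · simpa [s15Col, hp, hq] using hpq
  · simp [s15Col, hp, hq] at hpq
  · simp [s15Col, hp, hq] at hpq
  · rw [← hp, ← hq]
    apply hc
    · simp [hp]; exact ⟨p, hp⟩
    · simp [hq]; exact ⟨q, hq⟩

theorem s15_egA (k m' n' : ℕ) (x : Fin k ⊕ Fin m') (y : Fin k ⊕ Fin n') :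
    egA k m' n' x y = if s15Col k m' x = s15Col k n' y then (k : ℝ) + 1 else -1 := by
  rcases x with x | x <;> rcases y with y | y <;> simp [egA, s15Col, egA11]

theorem s15_miss (k : ℕ) (g : Fin k → Option (Fin k)) (hg : Function.Injective g) :
    ∃ b, (∀ q, g q ≠ b) ∧ ∀ x, x ≠ b → ∃ q, g q = x := by
  have hns : ¬ Function.Surjective g := by
    intro hs
    have := Fintype.card_le_of_surjective g hs
    simp at this
  simp only [Function.Surjective, not_forall, not_exists] at hns
  obtain ⟨b, hb⟩ := hns
  refine ⟨b, hb, ?_⟩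
  have hG : Function.Injective (fun o : Option (Fin k) => o.elim b g) := by
    intro o o' h
    rcases o with _ | o <;> rcases o' with _ | o'
    · rfl
    · exact absurd h.symm (hb o')
    · exact absurd h (hb o)
    · exact congrArg some (hg h)
  intro x hx
  obtain ⟨o, ho⟩ := (Finite.injective_iff_surjective.mp hG) x
  rcases o with _ | o
  · exact absurd ho.symm hx
  · exact ⟨o, ho⟩

theorem s15_perm (k : ℕ) (f g : Fin k → Option (Fin k)) (hf : Function.Injective f)
    (hg : Function.Injective g) :
    ∃ (π : Fin k ≃ Fin k) (b : Option (Fin k)), ∀ p q, f p = g q ↔ (π p = q ∧ f p ≠ b) := by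
  obtain ⟨a, ha, ha'⟩ := s15_miss k f hf
  obtain ⟨b, hb, hb'⟩ := s15_miss k g hg
  have hex : ∀ p, ∃ q, g q = Equiv.swap a b (f p) := by
    intro p
    apply hb'
    intro h
    apply ha p
    exact (Equiv.swap a b).injective (h.trans (Equiv.swap_apply_left a b).symm)
  choose h hh using hex
  have hinj : Function.Injective h := by
    intro p q hpq
    apply hf
    apply (Equiv.swap a b).injective
    rw [← hh, ← hh, hpq]
  refine ⟨Equiv.ofBijective h (Finite.injective_iff_bijective.mp hinj), b, ?_⟩
  intro p q
  simp only [Equiv.ofBijective_apply]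
  constructor
  · intro hpq
    have hne : f p ≠ b := by rw [hpq]; exact hb q
    refine ⟨hg ?_, hne⟩
    rw [hh, Equiv.swap_apply_of_ne_of_ne (ha p) hne, hpq]
  · rintro ⟨rfl, hne⟩
    rw [hh, Equiv.swap_apply_of_ne_of_ne (ha p) hne]

theorem s15_det_le {k m' n' : ℕ} (r : Fin k → Fin k ⊕ Fin m') (c : Fin k → Fin k ⊕ Fin n')
    (hr : DiffOne Sum.inl r) (hc : DiffOne Sum.inl c) :
    |((egA k m' n').submatrix r c).det| ≤ |(egA11 k).det| := by
  have hf := s15_col_inj k m' r hr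
  have hg := s15_col_inj k n' c hc
  obtain ⟨π, b, hπ⟩ := s15_perm k _ _ hf hg
  by_cases hb : ∃ p0, (s15Col k m' ∘ r) p0 = b
  · obtain ⟨p0, hp0⟩ := hb
    have : (egA k m' n').submatrix r c = (Matrix.of fun p q : Fin k =>
        if p = q ∧ p ≠ π p0 then (k : ℝ) + 1 else -1).submatrix π (Equiv.refl _) := by
      ext p q
      have h1 := hπ p q
      have h2 : (s15Col k m' ∘ r) p ≠ b ↔ π p ≠ π p0 := by
        rw [← hp0, hf.ne_iff, π.injective.ne_iff]
      rw [h2] at h1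
      simp only [Function.comp] at h1
      simp only [submatrix_apply, s15_egA, of_apply, Equiv.refl_apply, h1]
    rw [this, abs_det_submatrix_equiv_equiv, s15_det_A11', abs_mul]
    have : |(-1 / 2 : ℝ)| ≤ 1 := by rw [abs_le]; norm_num
    exact mul_le_of_le_one_right (abs_nonneg _) this
  · have : (egA k m' n').submatrix r c = (egA11 k).submatrix π (Equiv.refl _) := by
      ext p q
      have h1 := hπ p q
      have h2 : (s15Col k m' ∘ r) p ≠ b := fun h => hb ⟨p, h⟩
      simp only [h2, ne_eq, not_false_eq_true, and_true] at h1
      simp only [Function.comp] at h1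
      simp only [submatrix_apply, s15_egA, egA11, of_apply, Equiv.refl_apply, h1]
    rw [this, abs_det_submatrix_equiv_equiv]

theorem statement_15 {k m' n' : ℕ} (hk : 2 ≤ k) :
    (egA11 k).det ≠ 0 ∧
    ∀ (r : Fin k → Fin k ⊕ Fin m') (c : Fin k → Fin k ⊕ Fin n'),
      DiffOne Sum.inl r → DiffOne Sum.inl c →
      vol ((egA k m' n').submatrix r c) ≤ vol (egA11 k) := by
  have hd := s15_det_A11 k (by omega)
  have hpos : 0 < (egA11 k).det := by rw [hd]; positivity
  refine ⟨hpos.ne', fun r c hr hc => ?_⟩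
  calc vol ((egA k m' n').submatrix r c) ≤ |((egA k m' n').submatrix r c).det| := s15_vol_le _
    _ ≤ |(egA11 k).det| := s15_det_le r c hr hc
    _ = 2 * ((k : ℝ) + 2) ^ (k - 1) := by rw [abs_of_pos hpos, hd]
    _ ≤ vol (egA11 k) := s15_vol_A11 k (by omega)
end
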